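/- Let K be a field and let P, Q be cochain complexes of K-vector spaces. Then for every integer n, there is an isomorphism H^n(P ⊗ Q) ≅ ⊕_{i+j=n} H^i(P) ⊗ H^j(Q). -/

import Mathlib

open scoped TensorProduct DirectSum

/-- The image of the differential landing in degree `n` of a cochain complex. -/
abbrev imAt {K : Type*} [Field K] {C : ℤ → Type*}
    [∀ n, AddCommGroup (C n)] [∀ n, Module K (C n)]
    (d : ∀ n, C n →ₗ[K] C (n + 1)) (n : ℤ) : Submodule K (C n) :=
  Submodule.span K {x | ∃ (m : ℤ) (h : m + 1 = n) (y : C m), x = cast (congrArg C h) (d m y)}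

/-- The cohomology `H^n` of a cochain complex of `K`-vector spaces. -/
abbrev cohAt {K : Type*} [Field K] {C : ℤ → Type*}
    [∀ n, AddCommGroup (C n)] [∀ n, Module K (C n)]
    (d : ∀ n, C n →ₗ[K] C (n + 1)) (n : ℤ) : Type _ :=
  LinearMap.ker (d n) ⧸ (imAt d n).comap (LinearMap.ker (d n)).subtype

/-- Generalized inverse of a linear map over a field. -/
lemma exists_genInv {K V W : Type*} [Field K] [AddCommGroup V] [Module K V]
    [AddCommGroup W] [Module K W] (f : V →ₗ[K] W) :
    ∃ s : W →ₗ[K] V, ∀ x, f (s (f x)) = f x := by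
  obtain ⟨g, hg⟩ := f.rangeRestrict.exists_rightInverse_of_surjective f.range_rangeRestrict
  obtain ⟨s, hs⟩ := g.exists_extend
  refine ⟨s, fun x => ?_⟩
  have h1 : s (f x) = g (f.rangeRestrict x) := LinearMap.congr_fun hs (f.rangeRestrict x)
  rw [h1]
  have h2 := LinearMap.congr_fun hg (f.rangeRestrict x)
  exact congrArg Subtype.val h2

lemma mem_imAt_succ {K : Type*} [Field K] {C : ℤ → Type*}
    [∀ n, AddCommGroup (C n)] [∀ n, Module K (C n)]
    (d : ∀ n, C n →ₗ[K] C (n + 1)) (n : ℤ) (x : C (n + 1)) :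
    x ∈ imAt d (n + 1) ↔ ∃ y, d n y = x := by
  constructor
  · intro hx
    have : imAt d (n + 1) ≤ LinearMap.range (d n) := by
      refine Submodule.span_le.2 ?_
      rintro x ⟨m, h, y, rfl⟩
      obtain rfl : m = n := by omega
      exact ⟨y, rfl⟩
    exact this hx
  · rintro ⟨y, rfl⟩
    exact Submodule.subset_span ⟨n, rfl, y, rfl⟩

/-- Over a field a complex deformation retracts onto its cohomology. -/
lemma exists_retract {K : Type*} [Field K] {C : ℤ → Type*}
    [∀ n, AddCommGroup (C n)] [∀ n, Module K (C n)]
    (d : ∀ n, C n →ₗ[K] C (n + 1)) (hd : ∀ n x, d (n + 1) (d n x) = 0) :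
    ∃ (i : ∀ n, cohAt d n →ₗ[K] C n) (p : ∀ n, C n →ₗ[K] cohAt d n)
      (h : ∀ n, C (n + 1) →ₗ[K] C n),
      (∀ n x, d n (i n x) = 0) ∧ (∀ n x, p (n + 1) (d n x) = 0) ∧ (∀ n x, p n (i n x) = x) ∧
      ∀ n x, x - i (n + 1) (p (n + 1) x) = d n (h n x) + h (n + 1) (d (n + 1) x) := by
  choose s hs using fun n => exists_genInv (d n)
  let e : ∀ n, C (n + 1) →ₗ[K] C (n + 1) := fun n =>
    LinearMap.id - d n ∘ₗ s n - s (n + 1) ∘ₗ d (n + 1)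
  have he : ∀ n x, e n x = x - d n (s n x) - s (n + 1) (d (n + 1) x) := fun n x => rfl
  have hde : ∀ n x, d (n + 1) (e n x) = 0 := by
    intro n x; simp [he, hd, hs]
  have hed : ∀ n x, e n (d n x) = 0 := by
    intro n x; simp [he, hd, hs]
  let h : ∀ n, C (n + 1) →ₗ[K] C n := fun n => s n ∘ₗ (LinearMap.id + e n)
  have hh : ∀ n x, h n x = s n (x + e n x) := fun n x => rfl
  have key : ∀ n, ∃ (i : cohAt d n →ₗ[K] C n) (p : C n →ₗ[K] cohAt d n),
      (∀ x, d n (i x) = 0) ∧ (∀ x ∈ imAt d n, p x = 0) ∧ (∀ x, p (i x) = x) ∧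
      ∀ m (hm : m + 1 = n) (x : C n), x - i (p x) =
        cast (congrArg C hm) (d m (h m (cast (congrArg C hm.symm) x))) + h n (d n x) := by
    intro n
    obtain ⟨m, rfl⟩ : ∃ m, n = m + 1 := ⟨n - 1, by omega⟩
    let q := (e m).codRestrict (LinearMap.ker (d (m + 1))) (fun x => hde m x)
    let p : C (m + 1) →ₗ[K] cohAt d (m + 1) := Submodule.mkQ _ ∘ₗ q
    let i : cohAt d (m + 1) →ₗ[K] C (m + 1) := Submodule.liftQ _
      (e m ∘ₗ (LinearMap.ker (d (m + 1))).subtype) (by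
        intro x hx
        obtain ⟨y, hy⟩ := (mem_imAt_succ d m _).1 hx
        change e m x.1 = 0
        change d m y = x.1 at hy
        rw [← hy, hed])
    have hip : ∀ x, i (p x) = e m (e m x) := fun x => rfl
    refine ⟨i, p, ?_, ?_, ?_, ?_⟩
    · intro x
      obtain ⟨z, rfl⟩ := Submodule.mkQ_surjective _ x
      exact hde m z.1
    · intro x hx
      obtain ⟨y, rfl⟩ := (mem_imAt_succ d m _).1 hx
      have : q (d m y) = 0 := Subtype.ext (hed m y)
      change Submodule.mkQ _ (q (d m y)) = 0
      rw [this, map_zero]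
    · intro x
      obtain ⟨z, rfl⟩ := Submodule.mkQ_surjective _ x
      change Submodule.mkQ _ (q (e m z.1)) = Submodule.mkQ _ z
      rw [← sub_eq_zero, ← map_sub]
      refine (Submodule.Quotient.mk_eq_zero _).2 ?_
      refine (mem_imAt_succ d m _).2 ⟨- s m (z.1 + e m z.1), ?_⟩
      change _ = e m (e m z.1) - z.1
      have hz : d (m + 1) z.1 = 0 := z.2
      have h1 : e m (e m z.1) = e m z.1 - d m (s m (e m z.1)) := by
        rw [he m (e m z.1), hde]; simp
      have h2 : e m z.1 = z.1 - d m (s m z.1) := by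
        rw [he m z.1, hz]; simp
      rw [h1, map_neg, map_add, map_add]
      nth_rewrite 2 [h2]
      abel
    · intro m' hm' x
      obtain rfl : m' = m := by omega
      rw [hip, cast_eq, cast_eq, hh, hh, hed, add_zero]
      have h1 : e m' (e m' x) = e m' x - d m' (s m' (e m' x)) := by
        rw [he m' (e m' x), hde]; simp
      rw [h1, map_add, map_add]
      nth_rewrite 1 [he m' x]
      abel
  choose i p h1 h2 h3 h4 using key
  exact ⟨i, p, h, h1, fun n x => h2 _ _ ((mem_imAt_succ d n _).2 ⟨x, rfl⟩), h3,
    fun n x => h4 (n + 1) n rfl x⟩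

/-- A criterion for identifying the cohomology. -/
lemma coh_equiv_of {K : Type*} [Field K] {C : ℤ → Type*}
    [∀ n, AddCommGroup (C n)] [∀ n, Module K (C n)]
    (d : ∀ n, C n →ₗ[K] C (n + 1)) (n : ℤ) {M : Type*} [AddCommMonoid M] [Module K M]
    (i : M →ₗ[K] C (n + 1)) (p : C (n + 1) →ₗ[K] M)
    (hi : ∀ x, d (n + 1) (i x) = 0) (hp : ∀ x, p (d n x) = 0) (hpi : ∀ x, p (i x) = x)
    (h : ∀ x, d (n + 1) x = 0 → p x = 0 → ∃ y, d n y = x) :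
    Nonempty (cohAt d (n + 1) ≃ₗ[K] M) := by
  let _ : AddCommGroup M := Module.addCommMonoidToAddCommGroup K
  let f : LinearMap.ker (d (n + 1)) →ₗ[K] M := p ∘ₗ Submodule.subtype _
  have hf : Function.Surjective f := fun x => ⟨⟨i x, hi x⟩, hpi x⟩
  have hk : (imAt d (n + 1)).comap (LinearMap.ker (d (n + 1))).subtype = LinearMap.ker f := by
    ext z
    rw [Submodule.mem_comap, mem_imAt_succ]
    constructor
    · rintro ⟨y, hy⟩
      change p ((LinearMap.ker (d (n + 1))).subtype z) = 0
      rw [← hy, hp]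
    · intro hz
      exact h z.1 z.2 hz
  exact ⟨(Submodule.quotEquivOfEq _ _ hk).trans (f.quotKerEquivOfSurjective hf)⟩

/-- Existence of a homotopy-type operator on the tensor product. -/
lemma exists_tensor_homotopy {K : Type} [Field K] {P Q : ℤ → Type}
    [∀ n, AddCommGroup (P n)] [∀ n, Module K (P n)]
    [∀ n, AddCommGroup (Q n)] [∀ n, Module K (Q n)]
    (g : ∀ n, P n →ₗ[K] P n)
    (hP : ∀ n, P (n + 1) →ₗ[K] P n) (hQ : ∀ n, Q (n + 1) →ₗ[K] Q n) (m : ℤ) :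
    ∃ h : (⨁ ij : {ij : ℤ × ℤ // ij.1 + ij.2 = m + 1}, TensorProduct K (P ij.1.1) (Q ij.1.2)) →ₗ[K]
      (⨁ ij : {ij : ℤ × ℤ // ij.1 + ij.2 = m}, TensorProduct K (P ij.1.1) (Q ij.1.2)),
      ∀ (a b : ℤ) (hab : a + 1 + (b + 1) = m + 1) (x : P (a + 1)) (y : Q (b + 1)),
        h (DirectSum.lof K {ij : ℤ × ℤ // ij.1 + ij.2 = m + 1}
          (fun ij => TensorProduct K (P ij.1.1) (Q ij.1.2)) ⟨(a + 1, b + 1), hab⟩ (x ⊗ₜ y)) =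
        DirectSum.lof K {ij : ℤ × ℤ // ij.1 + ij.2 = m}
          (fun ij => TensorProduct K (P ij.1.1) (Q ij.1.2))
          ⟨(a, b + 1), by show a + (b + 1) = m; omega⟩ (hP a x ⊗ₜ y)
        + ((-1 : K) ^ (a + 1)) • DirectSum.lof K {ij : ℤ × ℤ // ij.1 + ij.2 = m}
          (fun ij => TensorProduct K (P ij.1.1) (Q ij.1.2))
          ⟨(a + 1, b), by show a + 1 + b = m; omega⟩ (g (a + 1) x ⊗ₜ hQ b y) := by
  have key : ∀ ij : {ij : ℤ × ℤ // ij.1 + ij.2 = m + 1},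
      ∃ f : TensorProduct K (P ij.1.1) (Q ij.1.2) →ₗ[K]
        (⨁ ij : {ij : ℤ × ℤ // ij.1 + ij.2 = m}, TensorProduct K (P ij.1.1) (Q ij.1.2)),
      ∀ (a b : ℤ) (ha : a + 1 = ij.1.1) (hb : b + 1 = ij.1.2) (x : P (a + 1)) (y : Q (b + 1)),
        f ((cast (congrArg P ha) x) ⊗ₜ (cast (congrArg Q hb) y)) =
        DirectSum.lof K {ij : ℤ × ℤ // ij.1 + ij.2 = m}
          (fun ij => TensorProduct K (P ij.1.1) (Q ij.1.2))
          ⟨(a, b + 1), by have := ij.2; show a + (b + 1) = m; omega⟩ (hP a x ⊗ₜ y)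
        + ((-1 : K) ^ (a + 1)) • DirectSum.lof K {ij : ℤ × ℤ // ij.1 + ij.2 = m}
          (fun ij => TensorProduct K (P ij.1.1) (Q ij.1.2))
          ⟨(a + 1, b), by have := ij.2; show a + 1 + b = m; omega⟩ (g (a + 1) x ⊗ₜ hQ b y) := by
    rintro ⟨⟨i, j⟩, hij⟩
    obtain ⟨a, rfl⟩ : ∃ a, i = a + 1 := ⟨i - 1, by omega⟩
    obtain ⟨b, rfl⟩ : ∃ b, j = b + 1 := ⟨j - 1, by omega⟩
    have hij' : a + 1 + (b + 1) = m + 1 := hij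
    refine ⟨DirectSum.lof K {ij : ℤ × ℤ // ij.1 + ij.2 = m}
          (fun ij => TensorProduct K (P ij.1.1) (Q ij.1.2))
          ⟨(a, b + 1), by show a + (b + 1) = m; omega⟩ ∘ₗ TensorProduct.map (hP a) LinearMap.id
        + ((-1 : K) ^ (a + 1)) • (DirectSum.lof K {ij : ℤ × ℤ // ij.1 + ij.2 = m}
          (fun ij => TensorProduct K (P ij.1.1) (Q ij.1.2))
          ⟨(a + 1, b), by show a + 1 + b = m; omega⟩ ∘ₗ TensorProduct.map (g (a + 1)) (hQ b)), ?_⟩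
    intro a' b' ha hb x y
    obtain rfl : a' = a := by
      have : a' + 1 = a + 1 := ha
      omega
    obtain rfl : b' = b := by
      have : b' + 1 = b + 1 := hb
      omega
    rfl
  choose f hf using key
  refine ⟨DirectSum.toModule K _ _ f, ?_⟩
  intro a b hab x y
  rw [DirectSum.toModule_lof]
  exact hf ⟨(a + 1, b + 1), hab⟩ a b rfl rfl x y

/-- Induction principle for linear maps out of the tensor product complex. -/
lemma ext_tensor {K : Type} [Field K] {ι : Type} [DecidableEq ι] {A B : ι → Type}
    [∀ n, AddCommMonoid (A n)] [∀ n, Module K (A n)]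
    [∀ n, AddCommMonoid (B n)] [∀ n, Module K (B n)] {M : Type*} [AddCommMonoid M] [Module K M]
    (f g : (⨁ k, TensorProduct K (A k) (B k)) →ₗ[K] M)
    (h : ∀ k x y, f (DirectSum.lof K ι (fun k => TensorProduct K (A k) (B k)) k (x ⊗ₜ y)) =
      g (DirectSum.lof K ι (fun k => TensorProduct K (A k) (B k)) k (x ⊗ₜ y))) : f = g := by
  refine DirectSum.linearMap_ext K fun k => ?_
  refine TensorProduct.ext' fun x y => ?_
  exact h k x y
/-- Core of the Künneth formula. -/
lemma kunneth_core (K : Type) [Field K] (P Q : ℤ → Type)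
    [∀ n, AddCommGroup (P n)] [∀ n, Module K (P n)]
    [∀ n, AddCommGroup (Q n)] [∀ n, Module K (Q n)]
    (dP : ∀ n, P n →ₗ[K] P (n + 1)) (dQ : ∀ n, Q n →ₗ[K] Q (n + 1))
    (dT : ∀ n : ℤ,
      (⨁ ij : {ij : ℤ × ℤ // ij.1 + ij.2 = n}, TensorProduct K (P ij.1.1) (Q ij.1.2)) →ₗ[K]
      (⨁ ij : {ij : ℤ × ℤ // ij.1 + ij.2 = n + 1}, TensorProduct K (P ij.1.1) (Q ij.1.2)))
    (hdT : ∀ (n : ℤ) (ij : {ij : ℤ × ℤ // ij.1 + ij.2 = n}) (x : P ij.1.1) (y : Q ij.1.2)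
      (h1 : ij.1.1 + 1 + ij.1.2 = n + 1) (h2 : ij.1.1 + (ij.1.2 + 1) = n + 1),
      dT n (DirectSum.lof K {ij : ℤ × ℤ // ij.1 + ij.2 = n}
          (fun ij => TensorProduct K (P ij.1.1) (Q ij.1.2)) ij (x ⊗ₜ y)) =
        DirectSum.lof K {ij : ℤ × ℤ // ij.1 + ij.2 = n + 1}
          (fun ij => TensorProduct K (P ij.1.1) (Q ij.1.2))
          ⟨(ij.1.1 + 1, ij.1.2), h1⟩
          ((dP ij.1.1 x) ⊗ₜ y)
        + ((-1 : K) ^ ij.1.1) • DirectSum.lof K {ij : ℤ × ℤ // ij.1 + ij.2 = n + 1}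
          (fun ij => TensorProduct K (P ij.1.1) (Q ij.1.2))
          ⟨(ij.1.1, ij.1.2 + 1), h2⟩
          (x ⊗ₜ (dQ ij.1.2 y)))
    (HP HQ : ℤ → Type)
    [∀ n, AddCommMonoid (HP n)] [∀ n, Module K (HP n)]
    [∀ n, AddCommMonoid (HQ n)] [∀ n, Module K (HQ n)]
    (iP : ∀ n, HP n →ₗ[K] P n) (pP : ∀ n, P n →ₗ[K] HP n) (hP : ∀ n, P (n + 1) →ₗ[K] P n)
    (h1P : ∀ n x, dP n (iP n x) = 0) (h2P : ∀ n x, pP (n + 1) (dP n x) = 0)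
    (h3P : ∀ n x, pP n (iP n x) = x)
    (h4P : ∀ n x, x - iP (n + 1) (pP (n + 1) x) = dP n (hP n x) + hP (n + 1) (dP (n + 1) x))
    (iQ : ∀ n, HQ n →ₗ[K] Q n) (pQ : ∀ n, Q n →ₗ[K] HQ n) (hQ : ∀ n, Q (n + 1) →ₗ[K] Q n)
    (h1Q : ∀ n x, dQ n (iQ n x) = 0) (h2Q : ∀ n x, pQ (n + 1) (dQ n x) = 0)
    (h3Q : ∀ n x, pQ n (iQ n x) = x)
    (h4Q : ∀ n x, x - iQ (n + 1) (pQ (n + 1) x) = dQ n (hQ n x) + hQ (n + 1) (dQ (n + 1) x)) :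
    ∀ n : ℤ, Nonempty ((cohAt dT n) ≃ₗ[K]
      ⨁ ij : {ij : ℤ × ℤ // ij.1 + ij.2 = n},
        TensorProduct K (HP ij.1.1) (HQ ij.1.2)) := by
  replace hdT := fun n ij x y => hdT n ij x y
    (by have h := ij.2; omega) (by have h := ij.2; omega)
  intro n
  obtain ⟨m, rfl⟩ : ∃ m, n = m + 1 := ⟨n - 1, by omega⟩
  choose h hh using exists_tensor_homotopy (K := K) (P := P) (Q := Q)
    (fun n => iP n ∘ₗ pP n) hP hQ
  let I := DirectSum.lmap (R := K) (fun ij : {ij : ℤ × ℤ // ij.1 + ij.2 = m + 1} =>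
    TensorProduct.map (iP ij.1.1) (iQ ij.1.2))
  let p : ∀ n, (⨁ ij : {ij : ℤ × ℤ // ij.1 + ij.2 = n}, TensorProduct K (P ij.1.1) (Q ij.1.2)) →ₗ[K]
      ⨁ ij : {ij : ℤ × ℤ // ij.1 + ij.2 = n},
        TensorProduct K (HP ij.1.1) (HQ ij.1.2) := fun n =>
    DirectSum.lmap (R := K) (fun ij : {ij : ℤ × ℤ // ij.1 + ij.2 = n} =>
      TensorProduct.map (pP ij.1.1) (pQ ij.1.2))
  have hI : ∀ ij x y, I (DirectSum.lof K {ij : ℤ × ℤ // ij.1 + ij.2 = m + 1}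
      (fun ij => TensorProduct K (HP ij.1.1) (HQ ij.1.2)) ij (x ⊗ₜ y)) =
      DirectSum.lof K {ij : ℤ × ℤ // ij.1 + ij.2 = m + 1}
        (fun ij => TensorProduct K (P ij.1.1) (Q ij.1.2)) ij (iP _ x ⊗ₜ iQ _ y) := by
    intro ij x y
    simp only [I, DirectSum.lmap_lof, TensorProduct.map_tmul]
  have hp : ∀ n ij x y, p n (DirectSum.lof K {ij : ℤ × ℤ // ij.1 + ij.2 = n}
      (fun ij => TensorProduct K (P ij.1.1) (Q ij.1.2)) ij (x ⊗ₜ y)) =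
      DirectSum.lof K {ij : ℤ × ℤ // ij.1 + ij.2 = n}
        (fun ij => TensorProduct K (HP ij.1.1) (HQ ij.1.2)) ij
          (pP _ x ⊗ₜ pQ _ y) := by
    intro n ij x y
    simp only [p, DirectSum.lmap_lof, TensorProduct.map_tmul]
  have e1 : dT (m + 1) ∘ₗ I = 0 := by
    refine ext_tensor (A := fun ij : {ij : ℤ × ℤ // ij.1 + ij.2 = m + 1} => HP ij.1.1) (B := fun ij : {ij : ℤ × ℤ // ij.1 + ij.2 = m + 1} => HQ ij.1.2) _ _ fun ij x y => ?_
    rw [LinearMap.comp_apply, hI, hdT, h1P, h1Q]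
    simp
  have e2 : p (m + 1) ∘ₗ dT m = 0 := by
    refine ext_tensor _ _ fun ij x y => ?_
    rw [LinearMap.comp_apply, hdT, map_add, map_smul, hp, hp, h2P, h2Q]
    simp
  have e3 : p (m + 1) ∘ₗ I = LinearMap.id := by
    refine ext_tensor (A := fun ij : {ij : ℤ × ℤ // ij.1 + ij.2 = m + 1} => HP ij.1.1) (B := fun ij : {ij : ℤ × ℤ // ij.1 + ij.2 = m + 1} => HQ ij.1.2) _ _ fun ij x y => ?_
    rw [LinearMap.comp_apply, hI, hp, h3P, h3Q]
    rfl
  have e4 : LinearMap.id - I ∘ₗ p (m + 1) = dT m ∘ₗ h m + h (m + 1) ∘ₗ dT (m + 1) := by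
    refine ext_tensor _ _ ?_
    rintro ⟨⟨i, j⟩, hij⟩ x y
    obtain ⟨a, rfl⟩ : ∃ a, i = a + 1 := ⟨i - 1, by omega⟩
    obtain ⟨b, rfl⟩ : ∃ b, j = b + 1 := ⟨j - 1, by omega⟩
    change P (a + 1) at x
    change Q (b + 1) at y
    have hs : (-1 : K) ^ (a + 1) = - (-1 : K) ^ a := by
      rw [zpow_add₀ (by simp)]; simp
    have hss : (-1 : K) ^ a * (-1 : K) ^ a = 1 := by
      rw [← mul_zpow]; simp
    have hx : dP a (hP a x) = x - iP _ (pP _ x) - hP (a + 1) (dP (a + 1) x) := by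
      rw [h4P]; abel
    have hy : dQ b (hQ b y) = y - iQ _ (pQ _ y) - hQ (b + 1) (dQ (b + 1) y) := by
      rw [h4Q]; abel
    simp only [LinearMap.sub_apply, LinearMap.add_apply, LinearMap.comp_apply, LinearMap.id_apply]
    rw [hp, hI, hh, hdT]
    simp only [map_add, map_smul]
    rw [hdT, hdT, hh, hh]
    simp only [LinearMap.comp_apply, h1P, h2P, map_zero, TensorProduct.zero_tmul, smul_zero,
      add_zero, zero_add]
    simp only [hx, hy, TensorProduct.sub_tmul, TensorProduct.tmul_sub, map_sub, smul_sub, smul_add,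
      smul_smul, hs, smul_neg, hss, one_smul, neg_smul, neg_mul, mul_neg]
    abel
  refine coh_equiv_of dT m I (p (m + 1)) (fun x => LinearMap.congr_fun e1 x)
    (fun x => LinearMap.congr_fun e2 x) (fun x => LinearMap.congr_fun e3 x) ?_
  intro x hx hpx
  refine ⟨h m x, ?_⟩
  have := LinearMap.congr_fun e4 x
  simp only [LinearMap.sub_apply, LinearMap.add_apply, LinearMap.comp_apply, LinearMap.id_apply,
    hx, hpx, map_zero, sub_zero, add_zero] at this
  exact this.symm

/-- Künneth over a field: for cochain complexes `P, Q` of `K`-vector spaces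
and the tensor product complex `T` with `T^n = ⊕_{i+j=n} P^i ⊗ Q^j` and differential
`d(x ⊗ y) = dx ⊗ y + (-1)^{|x|} x ⊗ dy`, one has
`H^n(P ⊗ Q) ≅ ⊕_{i+j=n} H^i(P) ⊗ H^j(Q)` for every `n`. -/
theorem stmt_2 (K : Type) [Field K] (P Q : ℤ → Type)
    [∀ n, AddCommGroup (P n)] [∀ n, Module K (P n)]
    [∀ n, AddCommGroup (Q n)] [∀ n, Module K (Q n)]
    (dP : ∀ n, P n →ₗ[K] P (n + 1)) (dQ : ∀ n, Q n →ₗ[K] Q (n + 1))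
    (hdP : ∀ n (x : P n), dP (n + 1) (dP n x) = 0)
    (hdQ : ∀ n (y : Q n), dQ (n + 1) (dQ n y) = 0)
    (dT : ∀ n : ℤ,
      (⨁ ij : {ij : ℤ × ℤ // ij.1 + ij.2 = n}, TensorProduct K (P ij.1.1) (Q ij.1.2)) →ₗ[K]
      (⨁ ij : {ij : ℤ × ℤ // ij.1 + ij.2 = n + 1}, TensorProduct K (P ij.1.1) (Q ij.1.2)))
    (hdT : ∀ (n : ℤ) (ij : {ij : ℤ × ℤ // ij.1 + ij.2 = n}) (x : P ij.1.1) (y : Q ij.1.2),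
      dT n (DirectSum.lof K {ij : ℤ × ℤ // ij.1 + ij.2 = n}
          (fun ij => TensorProduct K (P ij.1.1) (Q ij.1.2)) ij (x ⊗ₜ y)) =
        DirectSum.lof K {ij : ℤ × ℤ // ij.1 + ij.2 = n + 1}
          (fun ij => TensorProduct K (P ij.1.1) (Q ij.1.2))
          ⟨(ij.1.1 + 1, ij.1.2), by have h := ij.2; show ij.1.1 + 1 + ij.1.2 = n + 1; omega⟩
          ((dP ij.1.1 x) ⊗ₜ y)
        + ((-1 : K) ^ ij.1.1) • DirectSum.lof K {ij : ℤ × ℤ // ij.1 + ij.2 = n + 1}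
          (fun ij => TensorProduct K (P ij.1.1) (Q ij.1.2))
          ⟨(ij.1.1, ij.1.2 + 1), by have h := ij.2; show ij.1.1 + (ij.1.2 + 1) = n + 1; omega⟩
          (x ⊗ₜ (dQ ij.1.2 y)))
    (hdTsq : ∀ n x, dT (n + 1) (dT n x) = 0) :
    ∀ n : ℤ, Nonempty ((cohAt dT n) ≃ₗ[K]
      ⨁ ij : {ij : ℤ × ℤ // ij.1 + ij.2 = n},
        TensorProduct K (cohAt dP ij.1.1) (cohAt dQ ij.1.2)) := by
  obtain ⟨iP, pP, hP, h1P, h2P, h3P, h4P⟩ := exists_retract dP hdP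
  obtain ⟨iQ, pQ, hQ, h1Q, h2Q, h3Q, h4Q⟩ := exists_retract dQ hdQ
  exact kunneth_core K P Q dP dQ dT
    (fun n ij x y _ _ => hdT n ij x y) (cohAt dP) (cohAt dQ) iP pP hP h1P h2P h3P h4P
    iQ pQ hQ h1Q h2Q h3Q h4Q
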